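/- arXiv:1307.5803 — 2 statements merged into one kernel-verified Lean document; each statement's English description precedes it below -/
import Mathlib

section
/- Let M ⊆ M_O. Then every sequence of elements of M has a subsequence that converges in M_O to some element of M_O if and only if there exists a sequence r_i ↓ 0 such that for each i both sup_{μ ∈ M} μ(S \ C^{r_i}) < ∞, and for every η > 0 there exists a compact set K_i ⊆ S \ C^{r_i} with sup_{μ ∈ M} μ(S \ (C^{r_i} ∪ K_i)) ≤ η. -/
open MeasureTheory Metric Filter Topology Set ENNReal

noncomputable section

variable {S : Type*} [MetricSpace S] [MeasurableSpace S]

/-- `A` is bounded away from `C`: `A ⊆ S \ C^r` for some `r > 0`. -/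
def BddAway (C A : Set S) : Prop := ∃ r > 0, ∀ x ∈ A, r ≤ infDist x C

/-- The class `C_O` of test functions: bounded, nonnegative, continuous on `O = S \ C`,
and vanishing on `C^r` for some `r > 0` (extended by `0` to all of `S`). -/
def IsCO (C : Set S) (f : S → ℝ) : Prop :=
  ContinuousOn f Cᶜ ∧ (∀ x, 0 ≤ f x) ∧ (∃ B : ℝ, ∀ x, f x ≤ B) ∧
    ∃ r > 0, ∀ x, infDist x C < r → f x = 0

/-- The class `M_O`: Borel measures on `O = S \ C` (i.e. giving no mass to `C`)
that are finite on `S \ C^r` for each `r > 0`. -/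
def MemMO (C : Set S) (μ : Measure S) : Prop :=
  μ C = 0 ∧ ∀ r : ℝ, 0 < r → μ {x | r ≤ infDist x C} < ⊤

/-- Convergence `μ_n → μ` in `M_O`. -/
def MOTendsto (C : Set S) (μn : ℕ → Measure S) (μ : Measure S) : Prop :=
  ∀ f : S → ℝ, IsCO C f →
    Tendsto (fun n => ∫ x, f x ∂ μn n) atTop (𝓝 (∫ x, f x ∂ μ))

/-!
Multiplication by a function vanishing near `C` turns convergence in `M_O` into weak convergence
of finite measures, where Prokhorov's theorem applies; it passes from probability measures to
finite measures by adding a fixed atom and normalizing.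

If `M` is relatively compact, so are the measures `g μ`, `μ ∈ M`, for a cutoff `g` equal to `1` on
`S \ C^r`, and the mass bound and the tightness at `r` are read off from them.

Conversely, a weighted sum `v` of cutoffs with rapidly decaying coefficients is positive on `O`
and has `∫ v dμ ≤ 1` for all `μ ∈ M`. Put `w(x) = v(x) min(1, d(x, C))`. The mass of `w μ` on
`C^ρ` is at most `ρ`, so tightness of the `w μ` only has to be checked on `S \ C^ρ`, where it is
assumed. If `w μ_n` converges weakly to `Q`, then `μ_n` converges to `w⁻¹ Q` in `M_O`, because
`f / w` is bounded and continuous for every `f ∈ C_O`.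
-/

open scoped NNReal BoundedContinuousFunction

section Sequences

variable {X : Type*} [TopologicalSpace X] [TopologicalSpace.PseudoMetrizableSpace X]

lemma isCompact_closure_of_forall_exists_subseq_tendsto {s : Set X}
    (h : ∀ u : ℕ → X, (∀ n, u n ∈ s) → ∃ φ : ℕ → ℕ, StrictMono φ ∧ ∃ a,
      Tendsto (fun n => u (φ n)) atTop (𝓝 a)) :
    IsCompact (closure s) := by
  let := TopologicalSpace.pseudoMetrizableSpacePseudoMetric X
  refine IsSeqCompact.isCompact fun u hu => ?_
  choose v hvs hv using fun n : ℕ =>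
    Metric.mem_closure_iff.1 (hu n) (1 / (n + 1 : ℝ)) Nat.one_div_pos_of_nat
  obtain ⟨φ, hφ, a, ha⟩ := h v hvs
  have hdist : Tendsto (fun n => dist (v n) (u n)) atTop (𝓝 0) :=
    squeeze_zero (fun _ => dist_nonneg) (fun n => dist_comm (u n) (v n) ▸ (hv n).le)
      tendsto_one_div_add_atTop_nhds_zero_nat
  refine ⟨a, mem_closure_of_tendsto ha (.of_forall fun n => hvs _), φ, hφ, ?_⟩
  exact ha.congr_dist (hdist.comp hφ.tendsto_atTop)

end Sequences

section FiniteMeasure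

variable {X : Type*} [MeasurableSpace X]

/-- The total mass and the normalization of `μ + δ_x`. The added atom keeps the measure away from
zero, where normalization is discontinuous, so these are coordinates on all finite measures. -/
def massNormalizeAddDirac (x : X) (μ : FiniteMeasure X) : ℝ≥0 × ProbabilityMeasure X :=
  haveI : Nonempty X := ⟨x⟩
  ((μ + (diracProba x).toFiniteMeasure).mass, (μ + (diracProba x).toFiniteMeasure).normalize)

lemma measure_le_mass_mul_normalize (x : X) (μ : FiniteMeasure X) (s : Set X) :
    (μ : Measure X) s ≤
      (massNormalizeAddDirac x μ).1 * ((massNormalizeAddDirac x μ).2 : Measure X) s := by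
  have : Nonempty X := ⟨x⟩
  have h := (μ + (diracProba x).toFiniteMeasure).self_eq_mass_mul_normalize s
  calc (μ : Measure X) s
      ≤ ((μ + (diracProba x).toFiniteMeasure : FiniteMeasure X) : Measure X) s :=
        Measure.le_add_right le_rfl s
    _ = _ := by
      rw [← FiniteMeasure.ennreal_coeFn_eq_coeFn_toMeasure, h, ENNReal.coe_mul,
        ProbabilityMeasure.ennreal_coeFn_eq_coeFn_toMeasure]
      rfl

variable [TopologicalSpace X] [OpensMeasurableSpace X]

lemma tendsto_finiteMeasure_iff_forall_integral_coe_tendsto {ι : Type*} {l : Filter ι}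
    {μs : ι → FiniteMeasure X} {μ : FiniteMeasure X} :
    Tendsto μs l (𝓝 μ) ↔ ∀ f : X →ᵇ ℝ≥0, Tendsto (fun i => ∫ x, (f x : ℝ) ∂(μs i : Measure X)) l
      (𝓝 (∫ x, (f x : ℝ) ∂(μ : Measure X))) := by
  simp only [FiniteMeasure.tendsto_iff_forall_testAgainstNN_tendsto, ← NNReal.tendsto_coe,
    ← BoundedContinuousFunction.toReal_lintegral_coe_eq_integral]
  rfl

lemma tendsto_finiteMeasure_add_right_iff {ι : Type*} {l : Filter ι} {μs : ι → FiniteMeasure X}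
    {μ : FiniteMeasure X} (ν : FiniteMeasure X) :
    Tendsto (fun i => μs i + ν) l (𝓝 (μ + ν)) ↔ Tendsto μs l (𝓝 μ) := by
  have integral_add (κ : FiniteMeasure X) (f : X →ᵇ ℝ) :
      ∫ x, f x ∂((κ + ν : FiniteMeasure X) : Measure X) =
        ∫ x, f x ∂(κ : Measure X) + ∫ x, f x ∂(ν : Measure X) :=
    integral_add_measure (f.integrable _) (f.integrable _)
  simp only [FiniteMeasure.tendsto_iff_forall_integral_tendsto, integral_add,
    tendsto_add_const_iff]

lemma isInducing_massNormalizeAddDirac (x : X) :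
    IsInducing (massNormalizeAddDirac x) := by
  have : Nonempty X := ⟨x⟩
  have add_ne_zero (μ : FiniteMeasure X) : μ + (diracProba x).toFiniteMeasure ≠ 0 := by
    intro h
    simpa using congrArg (fun κ : FiniteMeasure X => (κ : Measure X) univ) h
  have tendsto_iff {l : Filter (FiniteMeasure X)} (μ : FiniteMeasure X) :
      Tendsto (massNormalizeAddDirac x) l (𝓝 (massNormalizeAddDirac x μ)) ↔ l ≤ 𝓝 μ := by
    rw [massNormalizeAddDirac, nhds_prod_eq, tendsto_prod_iff', and_comm]
    exact (FiniteMeasure.tendsto_normalize_iff_tendsto (add_ne_zero μ)).trans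
      (tendsto_finiteMeasure_add_right_iff _)
  exact isInducing_iff_nhds.2 fun μ =>
    le_antisymm (tendsto_iff_comap.1 ((tendsto_iff μ).2 le_rfl)) ((tendsto_iff μ).1 tendsto_comap)

end FiniteMeasure

section Prokhorov

variable {X : Type*} [TopologicalSpace X] [MeasurableSpace X]

instance [TopologicalSpace.PseudoMetrizableSpace X] [TopologicalSpace.SeparableSpace X]
    [OpensMeasurableSpace X] : TopologicalSpace.PseudoMetrizableSpace (FiniteMeasure X) := by
  rcases isEmpty_or_nonempty X with hX | ⟨⟨x⟩⟩
  · have : Subsingleton (FiniteMeasure X) :=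
      ⟨fun μ ν => Subtype.ext (Subsingleton.elim (μ : Measure X) ν)⟩
    exact (IsInducing.of_subsingleton fun _ : FiniteMeasure X => ()).pseudoMetrizableSpace
  · exact (isInducing_massNormalizeAddDirac x).pseudoMetrizableSpace

lemma isCompact_closure_of_isTightMeasureSet_of_mass_le [T2Space X] [NormalSpace X] [BorelSpace X]
    {T : Set (FiniteMeasure X)} {B : ℝ≥0} (hB : ∀ μ ∈ T, μ.mass ≤ B)
    (hT : IsTightMeasureSet ((↑) '' T : Set (Measure X))) : IsCompact (closure T) := by
  obtain ⟨u, -, hu0, hu⟩ := exists_seq_strictAnti_tendsto (0 : ℝ≥0)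
  have exists_compact (n : ℕ) : ∃ K : Set X, IsCompact K ∧ ∀ μ ∈ T, μ Kᶜ ≤ u n := by
    obtain ⟨K, hK, hKT⟩ := isTightMeasureSet_iff_exists_isCompact_measure_compl_le.1 hT (u n)
      (ENNReal.coe_pos.2 (hu0 n))
    refine ⟨K, hK, fun μ hμ => ENNReal.coe_le_coe.1 ?_⟩
    rw [FiniteMeasure.ennreal_coeFn_eq_coeFn_toMeasure]
    exact hKT μ (mem_image_of_mem _ hμ)
  choose K hK hKT using exists_compact
  exact (isCompact_setOfPred_finiteMeasure_mass_le_compl_isCompact_le B hu hK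
    (.inl inferInstance)).closure_of_subset fun μ hμ => ⟨hB μ hμ, fun n => hKT n μ hμ⟩

lemma exists_mass_le_of_isCompact_closure [OpensMeasurableSpace X] {T : Set (FiniteMeasure X)}
    (hT : IsCompact (closure T)) : ∃ B : ℝ≥0, ∀ μ ∈ T, μ.mass ≤ B := by
  obtain ⟨B, hB⟩ := (hT.image FiniteMeasure.continuous_mass).bddAbove
  exact ⟨B, fun μ hμ => hB (mem_image_of_mem _ (subset_closure hμ))⟩

lemma isTightMeasureSet_coe_image_of_isCompact_closure {X : Type*} [PseudoMetricSpace X]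
    [CompleteSpace X] [SecondCountableTopology X] [MeasurableSpace X] [OpensMeasurableSpace X]
    {T : Set (FiniteMeasure X)} (hT : IsCompact (closure T)) :
    IsTightMeasureSet ((↑) '' T : Set (Measure X)) := by
  rcases isEmpty_or_nonempty X with hX | ⟨⟨x⟩⟩
  · exact .of_compactSpace
  have hcont := (isInducing_massNormalizeAddDirac x).continuous
  obtain ⟨B, hB⟩ := (hT.image (continuous_fst.comp hcont)).bddAbove
  have hP : IsCompact (closure ((fun μ => (massNormalizeAddDirac x μ).2) '' T)) :=
    (hT.image (continuous_snd.comp hcont)).closure_of_subset (image_mono subset_closure)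
  rw [isTightMeasureSet_iff_exists_isCompact_measure_compl_le]
  intro ε hε
  obtain ⟨K, hK, hKP⟩ := isTightMeasureSet_iff_exists_isCompact_measure_compl_le.1
    (isTightMeasureSet_of_isCompact_closure hP) (ε / B) (ENNReal.div_pos hε.ne' ENNReal.coe_ne_top)
  refine ⟨K, hK, ?_⟩
  rintro _ ⟨μ, hμ, rfl⟩
  calc (μ : Measure X) Kᶜ
      ≤ (massNormalizeAddDirac x μ).1 * ((massNormalizeAddDirac x μ).2 : Measure X) Kᶜ :=
        measure_le_mass_mul_normalize x μ Kᶜ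
    _ ≤ B * (ε / B) := by
      gcongr
      · exact hB ⟨μ, subset_closure hμ, rfl⟩
      · exact hKP _ ⟨_, ⟨μ, hμ, rfl⟩, rfl⟩
    _ ≤ ε := ENNReal.mul_div_le

end Prokhorov

section Cutoff

variable {X : Type*} [PseudoMetricSpace X]

lemma exists_cutoff (C : Set X) {r : ℝ} (hr : 0 < r) :
    ∃ g : X →ᵇ ℝ≥0, (∀ x, g x ≤ 1) ∧ (∀ x, r ≤ infDist x C → g x = 1) ∧
      ∀ x, infDist x C < r / 2 → g x = 0 := by
  refine ⟨thickenedIndicator (half_pos hr) {x | r ≤ infDist x C}, thickenedIndicator_le_one _ _,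
    fun x hx => thickenedIndicator_one _ _ hx, fun x hx => thickenedIndicator_zero _ _ ?_⟩
  rw [mem_thickening_iff]
  rintro ⟨z, hz, hxz⟩
  have hzx : infDist z C ≤ infDist x C + dist x z := dist_comm z x ▸ infDist_le_infDist_add_dist
  linarith [hz.out]

/-- A weight for `M_O`: a function vanishing on `C` and bounded below by a positive constant away
from `C`. Multiplication by `w` turns measures in `M_O` into measures whose test functions no longer
have to vanish near `C`. -/
structure IsMOWeight (C : Set X) (w : X → ℝ≥0) : Prop where
  eq_zero : ∀ x ∈ C, w x = 0
  exists_le : ∀ ρ > 0, ∃ c > 0, ∀ x, ρ ≤ infDist x C → c ≤ w x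

lemma IsMOWeight.mul_min_infNndist {C : Set X} {v : X → ℝ≥0} (hv : IsMOWeight C v) :
    IsMOWeight C fun x => v x * min 1 (infNndist x C) where
  eq_zero x hx := by rw [hv.eq_zero x hx, zero_mul]
  exists_le ρ hρ := by
    obtain ⟨c, hc, hcv⟩ := hv.exists_le ρ hρ
    lift ρ to ℝ≥0 using hρ.le
    refine ⟨c * min 1 ρ, mul_pos hc (lt_min one_pos hρ), fun x hx => ?_⟩
    gcongr
    · exact hcv x hx
    · exact hx

variable [MeasurableSpace X] [OpensMeasurableSpace X]

lemma measurableSet_le_infDist (C : Set X) (r : ℝ) :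
    MeasurableSet {x : X | r ≤ infDist x C} :=
  measurableSet_le measurable_const (continuous_infDist_pt C).measurable

lemma lintegral_le_measure_le_infDist {C : Set X} {r : ℝ} {g : X → ℝ≥0} (hg1 : ∀ x, g x ≤ 1)
    (hg : ∀ x, infDist x C < r → g x = 0) (μ : Measure X) :
    ∫⁻ x, g x ∂μ ≤ μ {x | r ≤ infDist x C} := by
  rw [← lintegral_indicator_one (measurableSet_le_infDist C r)]
  refine lintegral_mono fun x => ?_
  by_cases hx : r ≤ infDist x C
  · simpa [hx] using hg1 x
  · simp [hg x (not_le.1 hx)]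

end Cutoff

lemma exists_boundedContinuous_coe_eq {X : Type*} [TopologicalSpace X] {f : X → ℝ≥0}
    (hf : Continuous f) {B : ℝ≥0} (hB : ∀ x, f x ≤ B) : ∃ g : X →ᵇ ℝ≥0, ⇑g = f := by
  have mem_Icc (x : X) : (f x : ℝ) ∈ Icc 0 (B : ℝ) := ⟨(f x).2, hB x⟩
  exact ⟨.mkOfBound ⟨f, hf⟩ (B - 0) fun x y => Real.dist_le_of_mem_Icc (mem_Icc x) (mem_Icc y),
    rfl⟩

lemma continuous_nnreal_tsum {X ι : Type*} [TopologicalSpace X] {f : ι → X → ℝ≥0} {u : ι → ℝ≥0}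
    (hf : ∀ i, Continuous (f i)) (hu : Summable u) (hfu : ∀ i x, f i x ≤ u i) :
    Continuous fun x => ∑' i, f i x := by
  rw [NNReal.isEmbedding_coe.continuous_iff]
  simp only [Function.comp_def, NNReal.coe_tsum]
  refine continuous_tsum (fun i => NNReal.continuous_coe.comp (hf i)) (NNReal.summable_coe.2 hu)
    fun i x => ?_
  rw [NNReal.norm_eq]
  exact hfu i x

lemma measure_le_withDensity {X : Type*} [MeasurableSpace X] {f : X → ℝ≥0∞} {s : Set X}
    (hs : MeasurableSet s) (hf : ∀ x ∈ s, 1 ≤ f x) (μ : Measure X) : μ s ≤ μ.withDensity f s := by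
  rw [withDensity_apply f hs, ← setLIntegral_one]
  exact setLIntegral_mono' hs hf

lemma exists_dominating_lintegral_le_one {X : Type*} [TopologicalSpace X] [MeasurableSpace X]
    [OpensMeasurableSpace X] {ι : Type*} [Countable ι] {g : ι → X →ᵇ ℝ≥0} (hg : ∀ i x, g i x ≤ 1)
    {b : ι → ℝ≥0∞} (hb : ∀ i, b i ≠ ∞) :
    ∃ v : X →ᵇ ℝ≥0, (∀ x, v x ≤ 1) ∧ (∀ i, ∃ c > 0, ∀ x, c * g i x ≤ v x) ∧
      (∀ x, (∀ i, g i x = 0) → v x = 0) ∧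
      ∀ μ : Measure X, (∀ i, ∫⁻ x, g i x ∂μ ≤ b i) → ∫⁻ x, v x ∂μ ≤ 1 := by
  obtain ⟨δ, hδ0, hδ⟩ := ENNReal.exists_pos_tsum_mul_lt_of_countable one_ne_zero
    (fun i => b i + 1) fun i => ENNReal.add_ne_top.2 ⟨hb i, one_ne_top⟩
  have hδ1 : ∑' i, (δ i : ℝ≥0∞) ≤ 1 :=
    (ENNReal.tsum_le_tsum fun i => le_mul_of_one_le_left' le_add_self).trans hδ.le
  have hδsum : Summable δ :=
    ENNReal.tsum_coe_ne_top_iff_summable.1 (ne_top_of_le_ne_top one_ne_top hδ1)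
  have hle (i : ι) (x : X) : δ i * g i x ≤ δ i := mul_le_of_le_one_right' (hg i x)
  have hsum (x : X) : Summable fun i => δ i * g i x := NNReal.summable_of_le (hle · x) hδsum
  have hle_one (x : X) : ∑' i, δ i * g i x ≤ 1 :=
    ((hsum x).tsum_le_tsum (hle · x) hδsum).trans <| by
      rwa [← ENNReal.coe_le_coe, ENNReal.coe_tsum hδsum]
  obtain ⟨v, hv⟩ := exists_boundedContinuous_coe_eq
    (continuous_nnreal_tsum (fun i => by fun_prop) hδsum hle) hle_one
  refine ⟨v, fun x => ?_, fun i => ⟨δ i, hδ0 i, fun x => ?_⟩, fun x hx => ?_, fun μ hμ => ?_⟩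
  · exact hv ▸ hle_one x
  · exact hv ▸ (hsum x).le_tsum i fun _ _ => zero_le
  · simp [hv, hx]
  calc ∫⁻ x, v x ∂μ
      = ∑' i, δ i * ∫⁻ x, g i x ∂μ := by
        simp only [hv, ENNReal.coe_tsum (hsum _), ENNReal.coe_mul]
        rw [lintegral_tsum fun i => by fun_prop]
        simp only [lintegral_const_mul' _ _ ENNReal.coe_ne_top]
    _ ≤ ∑' i, (b i + 1) * δ i := ENNReal.tsum_le_tsum fun i => by
        rw [mul_comm]
        gcongr
        exact (hμ i).trans le_self_add
    _ ≤ 1 := hδ.le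

section TestFunctions

variable {X : Type*} [MetricSpace X] {C : Set X} {f : X → ℝ}

lemma isCO_coe {g : X →ᵇ ℝ≥0} {r : ℝ} (hr : 0 < r) (hg : ∀ x, infDist x C < r → g x = 0) :
    IsCO C fun x => g x :=
  ⟨by fun_prop, fun x => (g x).2, ⟨nndist 0 g, fun x => g.apply_le_nndist_zero x⟩, r, hr,
    fun x hx => NNReal.coe_eq_zero.2 (hg x hx)⟩

lemma IsCO.continuous (hf : IsCO C f) : Continuous f := by
  obtain ⟨hcont, -, -, r, hr, hzero⟩ := hf
  refine continuous_iff_continuousAt.2 fun x => ?_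
  have hdist := continuous_infDist_pt C
  rcases lt_or_ge (infDist x C) r with hx | hx
  · have hev : ∀ᶠ y in 𝓝 x, infDist y C < r := hdist.continuousAt.eventually_lt_const hx
    exact continuousAt_const.congr (hev.mono fun y hy => (hzero y hy).symm)
  · have hev : ∀ᶠ y in 𝓝 x, 0 < infDist y C :=
      hdist.continuousAt.eventually_const_lt (hr.trans_le hx)
    refine hcont.continuousAt (hev.mono fun y hy hyC => ?_)
    exact hy.ne' (infDist_zero_of_mem hyC)

lemma IsMOWeight.ne_zero_of_isCO {w : X → ℝ≥0} (hw : IsMOWeight C w) (hf : IsCO C f) {x : X}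
    (hx : f x ≠ 0) : w x ≠ 0 := by
  obtain ⟨-, -, -, r, hr, hzero⟩ := hf
  obtain ⟨c, hc, hcw⟩ := hw.exists_le r hr
  exact (hc.trans_le (hcw x (not_lt.1 fun h => hx (hzero x h)))).ne'

lemma IsCO.exists_boundedContinuous_coe_eq_div (hf : IsCO C f) {w : X → ℝ≥0} (hw : IsMOWeight C w)
    (hwc : Continuous w) : ∃ q : X →ᵇ ℝ, ∀ x, q x = f x / w x := by
  have hfc := hf.continuous
  obtain ⟨-, hf0, ⟨B, hB⟩, r, hr, hzero⟩ := hf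
  obtain ⟨c, hc, hcw⟩ := hw.exists_le r hr
  have hmax_pos (x : X) : 0 < ((max c (w x) : ℝ≥0) : ℝ) :=
    NNReal.coe_pos.2 (lt_max_of_lt_left hc)
  have div_max_eq (x : X) : f x / (max c (w x) : ℝ≥0) = f x / w x := by
    rcases lt_or_ge (infDist x C) r with hx | hx
    · rw [hzero x hx, zero_div, zero_div]
    · rw [max_eq_right (hcw x hx)]
  refine ⟨.ofNormedAddCommGroup (fun x => f x / (max c (w x) : ℝ≥0)) ?_ (B / c) fun x => ?_,
    div_max_eq⟩
  · exact hfc.div (by fun_prop) fun x => (hmax_pos x).ne'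
  · rw [Real.norm_of_nonneg (div_nonneg (hf0 x) (hmax_pos x).le)]
    exact div_le_div₀ ((hf0 x).trans (hB x)) (hB x) hc (le_max_left _ _)

end TestFunctions

section RelativeCompactness

variable {C : Set S} {M : Set (Measure S)} {r : ℝ}

/-- Relative sequential compactness of `M` in `M_O`. -/
def IsMORelSeqCompact (C : Set S) (M : Set (Measure S)) : Prop :=
  ∀ μseq : ℕ → Measure S, (∀ n, μseq n ∈ M) →
    ∃ φ : ℕ → ℕ, StrictMono φ ∧ ∃ ν : Measure S, MemMO C ν ∧
      MOTendsto C (fun n => μseq (φ n)) ν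

/-- The condition imposed on `M` at a single radius `r`: the restrictions of its members to
`S \ C^r` have bounded mass and are uniformly tight. -/
def IsMOTightAt (C : Set S) (M : Set (Measure S)) (r : ℝ) : Prop :=
  (⨆ μ ∈ M, μ {x | r ≤ infDist x C}) < ⊤ ∧
    ∀ η : ℝ≥0∞, 0 < η → ∃ K : Set S, IsCompact K ∧ K ⊆ {x | r ≤ infDist x C} ∧
      ∀ μ ∈ M, μ ({x | r ≤ infDist x C} \ K) ≤ η

/-- The finite measures among the `w μ`, `μ ∈ M`, where `w μ` has density `w` with respect to `μ`.
Weak convergence of these measures encodes convergence in `M_O`. -/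
def weightedMeasures (w : S → ℝ≥0) (M : Set (Measure S)) : Set (FiniteMeasure S) :=
  {m | ∃ μ ∈ M, (m : Measure S) = μ.withDensity fun x => w x}

lemma IsMOTightAt.mono [OpensMeasurableSpace S] {r' : ℝ} (hr : r ≤ r') (h : IsMOTightAt C M r) :
    IsMOTightAt C M r' := by
  have hsub : {x : S | r' ≤ infDist x C} ⊆ {x | r ≤ infDist x C} := fun x hx => hr.trans hx
  refine ⟨(iSup₂_mono fun μ _ => measure_mono hsub).trans_lt h.1, fun η hη => ?_⟩
  obtain ⟨K, hK, -, hKM⟩ := h.2 η hη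
  refine ⟨K ∩ {x | r' ≤ infDist x C}, hK.inter_right (isClosed_le continuous_const
    (continuous_infDist_pt C)), inter_subset_right, fun μ hμ => ?_⟩
  rw [sdiff_inter_self_eq_sdiff]
  exact (measure_mono (sdiff_subset_sdiff_left hsub)).trans (hKM μ hμ)

lemma forall_isMOTightAt_iff_exists_seq [OpensMeasurableSpace S] :
    (∀ r > 0, IsMOTightAt C M r) ↔ ∃ r : ℕ → ℝ, StrictAnti r ∧ (∀ i, 0 < r i) ∧
      Tendsto r atTop (𝓝 0) ∧ ∀ i, IsMOTightAt C M (r i) := by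
  constructor
  · intro h
    obtain ⟨r, hr, hr0, hrlim⟩ := exists_seq_strictAnti_tendsto (0 : ℝ)
    exact ⟨r, hr, hr0, hrlim, fun i => h (r i) (hr0 i)⟩
  · rintro ⟨r, -, -, hrlim, h⟩ ρ hρ
    obtain ⟨i, hi⟩ := (hrlim.eventually_lt_const hρ).exists
    exact (h i).mono hi.le

lemma MOTendsto.tendsto_of_coe_eq_withDensity [OpensMeasurableSpace S] {μn : ℕ → Measure S}
    {ν : Measure S} (h : MOTendsto C μn ν) {g : S →ᵇ ℝ≥0} (hr : 0 < r)
    (hg : ∀ x, infDist x C < r → g x = 0) {mn : ℕ → FiniteMeasure S} {m : FiniteMeasure S}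
    (hmn : ∀ n, (mn n : Measure S) = (μn n).withDensity fun x => g x)
    (hm : (m : Measure S) = ν.withDensity fun x => g x) : Tendsto mn atTop (𝓝 m) := by
  refine tendsto_finiteMeasure_iff_forall_integral_coe_tendsto.2 fun f => ?_
  have integral_eq (μ : Measure S) :
      ∫ x, (f x : ℝ) ∂(μ.withDensity fun x => g x) = ∫ x, ((g * f) x : ℝ) ∂μ :=
    integral_withDensity_eq_integral_smul g.continuous.measurable _
  simp only [hmn, hm, integral_eq]
  exact h _ (isCO_coe hr fun x hx => by simp [hg x hx])

lemma IsMORelSeqCompact.isCompact_closure_weightedMeasures [OpensMeasurableSpace S]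
    [TopologicalSpace.SeparableSpace S] (h : IsMORelSeqCompact C M) {g : S →ᵇ ℝ≥0}
    (hg1 : ∀ x, g x ≤ 1) (hr : 0 < r) (hg : ∀ x, infDist x C < r → g x = 0) :
    IsCompact (closure (weightedMeasures g M)) := by
  refine isCompact_closure_of_forall_exists_subseq_tendsto fun m hm => ?_
  choose μ hμM hmμ using hm
  obtain ⟨φ, hφ, ν, hν, hlim⟩ := h μ hμM
  have hfin : IsFiniteMeasure (ν.withDensity fun x => (g x : ℝ≥0∞)) :=
    isFiniteMeasure_withDensity ((lintegral_le_measure_le_infDist hg1 hg ν).trans_lt (hν.2 r hr)).ne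
  exact ⟨φ, hφ, ⟨_, hfin⟩, hlim.tendsto_of_coe_eq_withDensity hr hg (fun n => hmμ (φ n)) rfl⟩

lemma isMOTightAt_of_isCompact_closure_weightedMeasures [OpensMeasurableSpace S] [CompleteSpace S]
    [TopologicalSpace.SeparableSpace S] {g : S → ℝ≥0} (hg : ∀ x, r ≤ infDist x C → 1 ≤ g x)
    (hgM : ∀ μ ∈ M, ∫⁻ x, g x ∂μ ≠ ∞) (hcomp : IsCompact (closure (weightedMeasures g M))) :
    IsMOTightAt C M r := by
  have := UniformSpace.secondCountable_of_separable S
  have exists_measure_le (μ : Measure S) (hμ : μ ∈ M) : ∃ m ∈ weightedMeasures g M,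
      ∀ s ⊆ {x | r ≤ infDist x C}, MeasurableSet s → μ s ≤ (m : Measure S) s :=
    ⟨⟨_, isFiniteMeasure_withDensity (hgM μ hμ)⟩, ⟨μ, hμ, rfl⟩, fun s hs hsm =>
      measure_le_withDensity hsm (fun x hx => ENNReal.one_le_coe_iff.2 (hg x (hs hx))) μ⟩
  refine ⟨?_, fun η hη => ?_⟩
  · obtain ⟨B, hB⟩ := exists_mass_le_of_isCompact_closure hcomp
    refine (iSup₂_le fun μ hμ => ?_).trans_lt (ENNReal.coe_lt_top (r := B))
    obtain ⟨m, hm, hμm⟩ := exists_measure_le μ hμ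
    calc μ {x | r ≤ infDist x C} ≤ (m : Measure S) {x | r ≤ infDist x C} :=
          hμm _ Subset.rfl (measurableSet_le_infDist C r)
      _ ≤ m.mass := by
          rw [FiniteMeasure.ennreal_mass]
          exact measure_mono (subset_univ _)
      _ ≤ B := ENNReal.coe_le_coe.2 (hB m hm)
  · obtain ⟨K, hK, hKM⟩ := isTightMeasureSet_iff_exists_isCompact_measure_compl_le.1
      (isTightMeasureSet_coe_image_of_isCompact_closure hcomp) η hη
    refine ⟨K ∩ {x | r ≤ infDist x C}, hK.inter_right (isClosed_le continuous_const
      (continuous_infDist_pt C)), inter_subset_right, fun μ hμ => ?_⟩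
    obtain ⟨m, hm, hμm⟩ := exists_measure_le μ hμ
    rw [sdiff_inter_self_eq_sdiff]
    calc μ ({x | r ≤ infDist x C} \ K) ≤ (m : Measure S) ({x | r ≤ infDist x C} \ K) :=
          hμm _ sdiff_subset ((measurableSet_le_infDist C r).diff hK.measurableSet)
      _ ≤ (m : Measure S) Kᶜ := measure_mono fun x hx => hx.2
      _ ≤ η := hKM _ (mem_image_of_mem _ hm)

lemma IsMORelSeqCompact.isMOTightAt [OpensMeasurableSpace S] [CompleteSpace S]
    [TopologicalSpace.SeparableSpace S] (h : IsMORelSeqCompact C M) (hM : ∀ μ ∈ M, MemMO C μ)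
    (hr : 0 < r) : IsMOTightAt C M r := by
  obtain ⟨g, hg1, hgr, hg0⟩ := exists_cutoff C hr
  refine isMOTightAt_of_isCompact_closure_weightedMeasures (fun x hx => (hgr x hx).ge)
    (fun μ hμ => ?_) (h.isCompact_closure_weightedMeasures hg1 (half_pos hr) hg0)
  exact ((lintegral_le_measure_le_infDist hg1 hg0 μ).trans_lt ((hM μ hμ).2 _ (half_pos hr))).ne

lemma exists_isMOWeight_lintegral_le_one [OpensMeasurableSpace S]
    (hM : ∀ r > 0, (⨆ μ ∈ M, μ {x | r ≤ infDist x C}) < ⊤) :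
    ∃ v : S →ᵇ ℝ≥0, IsMOWeight C v ∧ (∀ x, v x ≤ 1) ∧ ∀ μ ∈ M, ∫⁻ x, v x ∂μ ≤ 1 := by
  obtain ⟨r, -, hr0, hrlim⟩ := exists_seq_strictAnti_tendsto (0 : ℝ)
  choose g hg1 hgr hg0 using fun i => exists_cutoff C (hr0 i)
  obtain ⟨v, hv1, hgv, hv0, hv⟩ := exists_dominating_lintegral_le_one hg1
    fun i => (hM _ (half_pos (hr0 i))).ne
  refine ⟨v, ⟨fun x hx => hv0 x fun i => hg0 i x ?_, fun ρ hρ => ?_⟩, hv1,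
    fun μ hμ => hv μ fun i => ?_⟩
  · rw [infDist_zero_of_mem hx]
    exact half_pos (hr0 i)
  · obtain ⟨i, hi⟩ := (hrlim.eventually_lt_const hρ).exists
    obtain ⟨c, hc, hcv⟩ := hgv i
    exact ⟨c, hc, fun x hx => by simpa [hgr i x (hi.le.trans hx)] using hcv x⟩
  · exact (lintegral_le_measure_le_infDist (hg1 i) (hg0 i) μ).trans
      (le_iSup₂ (f := fun μ _ => μ {x | r i / 2 ≤ infDist x C}) μ hμ)

lemma isTightMeasureSet_coe_image_weightedMeasures [OpensMeasurableSpace S]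
    (hM : ∀ r > 0, IsMOTightAt C M r) {v : S → ℝ≥0} (hv : Measurable v) (hv1 : ∀ x, v x ≤ 1)
    (hvM : ∀ μ ∈ M, ∫⁻ x, v x ∂μ ≤ 1) :
    IsTightMeasureSet
      ((↑) '' weightedMeasures (fun x => v x * min 1 (infNndist x C)) M : Set (Measure S)) := by
  rw [isTightMeasureSet_iff_exists_isCompact_measure_compl_le]
  intro ε hε
  obtain ⟨ρ, hρ0, hρ⟩ := ENNReal.lt_iff_exists_nnreal_btwn.1 (ENNReal.half_pos hε.ne')
  obtain ⟨K, hK, -, hKM⟩ := (hM ρ (ENNReal.coe_pos.1 hρ0)).2 (ε / 2) (ENNReal.half_pos hε.ne')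
  refine ⟨K, hK, ?_⟩
  rintro _ ⟨m, ⟨μ, hμ, hmμ⟩, rfl⟩
  set D := {x | (ρ : ℝ) ≤ infDist x C} \ K
  have hD : MeasurableSet D := (measurableSet_le_infDist C ρ).diff hK.measurableSet
  have weight_le (x : S) (hx : x ∈ Kᶜ) :
      ((v x * min 1 (infNndist x C) : ℝ≥0) : ℝ≥0∞) ≤ ρ * v x + D.indicator 1 x := by
    rcases lt_or_ge (infNndist x C) ρ with hxρ | hxρ
    · rw [mul_comm, ENNReal.coe_mul]
      refine le_add_right ?_
      gcongr
      exact (min_le_right _ _).trans hxρ.le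
    · rw [indicator_of_mem (show x ∈ D from ⟨hxρ, hx⟩), Pi.one_apply]
      exact le_add_left (ENNReal.coe_le_one_iff.2 (mul_le_one' (hv1 x) (min_le_left _ _)))
  calc (m : Measure S) Kᶜ
      = ∫⁻ x in Kᶜ, (v x * min 1 (infNndist x C) : ℝ≥0) ∂μ := by
        rw [hmμ, withDensity_apply _ hK.measurableSet.compl]
    _ ≤ ∫⁻ x, ρ * v x + D.indicator 1 x ∂μ :=
        (setLIntegral_mono' hK.measurableSet.compl weight_le).trans (setLIntegral_le_lintegral _ _)
    _ = ρ * ∫⁻ x, v x ∂μ + μ D := by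
        rw [lintegral_add_left (by fun_prop), lintegral_const_mul' _ _ ENNReal.coe_ne_top,
          lintegral_indicator_one hD]
    _ ≤ ε / 2 * 1 + ε / 2 := by
        gcongr
        · exact hvM μ hμ
        · exact hKM μ hμ
    _ = ε := by rw [mul_one, ENNReal.add_halves]

lemma exists_isMOWeight_isTightMeasureSet_weightedMeasures [OpensMeasurableSpace S]
    (hM : ∀ r > 0, IsMOTightAt C M r) :
    ∃ w : S → ℝ≥0, Continuous w ∧ IsMOWeight C w ∧ (∀ μ ∈ M, ∫⁻ x, w x ∂μ ≤ 1) ∧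
      IsTightMeasureSet ((↑) '' weightedMeasures w M : Set (Measure S)) := by
  obtain ⟨v, hv, hv1, hvM⟩ := exists_isMOWeight_lintegral_le_one fun r hr => (hM r hr).1
  refine ⟨fun x => v x * min 1 (infNndist x C),
    v.continuous.mul (continuous_const.min (continuous_infNndist_pt C)), hv.mul_min_infNndist,
    fun μ hμ => (lintegral_mono fun x => ?_).trans (hvM μ hμ),
    isTightMeasureSet_coe_image_weightedMeasures hM v.continuous.measurable hv1 hvM⟩
  exact ENNReal.coe_le_coe.2 (mul_le_of_le_one_right' (min_le_left _ _))

lemma IsMOWeight.memMO_withDensity_inv [OpensMeasurableSpace S] {w : S → ℝ≥0} (hw : IsMOWeight C w)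
    (hwm : Measurable w) (μ : Measure S) [IsFiniteMeasure μ] :
    MemMO C (μ.withDensity fun x => ((w x)⁻¹ : ℝ≥0)) := by
  refine ⟨(withDensity_apply_eq_zero (by fun_prop)).2 ?_, fun r hr => ?_⟩
  · convert measure_empty (μ := μ)
    refine eq_empty_of_forall_notMem fun x ⟨hx, hxC⟩ => hx ?_
    simp [hw.eq_zero x hxC]
  · obtain ⟨c, hc, hcw⟩ := hw.exists_le r hr
    have hD := measurableSet_le_infDist C r
    calc μ.withDensity (fun x => ((w x)⁻¹ : ℝ≥0)) {x | r ≤ infDist x C}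
        ≤ ∫⁻ _ in {x | r ≤ infDist x C}, (c⁻¹ : ℝ≥0) ∂μ := by
          rw [withDensity_apply _ hD]
          exact setLIntegral_mono' hD fun x hx =>
            ENNReal.coe_le_coe.2 (inv_anti₀ hc (hcw x hx))
      _ = (c⁻¹ : ℝ≥0) * μ {x | r ≤ infDist x C} := setLIntegral_const _ _
      _ < ⊤ := ENNReal.mul_lt_top ENNReal.coe_lt_top (measure_lt_top _ _)

lemma IsMOWeight.moTendsto_of_tendsto [OpensMeasurableSpace S] {w : S → ℝ≥0} (hw : IsMOWeight C w)
    (hwc : Continuous w) {μn : ℕ → Measure S} {mn : ℕ → FiniteMeasure S} {m : FiniteMeasure S}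
    (hmn : ∀ n, (mn n : Measure S) = (μn n).withDensity fun x => w x)
    (h : Tendsto mn atTop (𝓝 m)) :
    MOTendsto C μn ((m : Measure S).withDensity fun x => ((w x)⁻¹ : ℝ≥0)) := by
  intro f hf
  obtain ⟨q, hq⟩ := hf.exists_boundedContinuous_coe_eq_div hw hwc
  have integral_eq (n : ℕ) : ∫ x, f x ∂μn n = ∫ x, q x ∂(mn n : Measure S) := by
    rw [hmn, integral_withDensity_eq_integral_smul hwc.measurable]
    refine integral_congr_ae (.of_forall fun x => ?_)
    simp only [hq, NNReal.smul_def, smul_eq_mul]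
    refine (mul_div_cancel_of_imp' fun hwx => ?_).symm
    exact not_imp_not.1 (hw.ne_zero_of_isCO hf) (NNReal.coe_eq_zero.1 hwx)
  have integral_limit_eq : ∫ x, f x ∂((m : Measure S).withDensity fun x => ((w x)⁻¹ : ℝ≥0)) =
      ∫ x, q x ∂(m : Measure S) := by
    rw [integral_withDensity_eq_integral_smul (f := fun x => (w x)⁻¹) hwc.measurable.inv]
    simp only [hq, NNReal.smul_def, NNReal.coe_inv, smul_eq_mul, div_eq_inv_mul]
  simp only [integral_eq, integral_limit_eq]
  exact FiniteMeasure.tendsto_iff_forall_integral_tendsto.1 h q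

lemma isMORelSeqCompact_of_forall_isMOTightAt [BorelSpace S] [TopologicalSpace.SeparableSpace S]
    (hM : ∀ r > 0, IsMOTightAt C M r) : IsMORelSeqCompact C M := by
  obtain ⟨w, hwc, hw, hwM, htight⟩ := exists_isMOWeight_isTightMeasureSet_weightedMeasures hM
  have mass_le (m : FiniteMeasure S) (hm : m ∈ weightedMeasures w M) : m.mass ≤ 1 := by
    obtain ⟨μ, hμ, hmμ⟩ := hm
    rw [← ENNReal.coe_le_coe, FiniteMeasure.ennreal_mass, hmμ, withDensity_apply _ .univ,
      setLIntegral_univ]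
    exact hwM μ hμ
  have hcomp := isCompact_closure_of_isTightMeasureSet_of_mass_le mass_le htight
  intro μ hμ
  let m (n : ℕ) : FiniteMeasure S := ⟨_, isFiniteMeasure_withDensity
    (ne_top_of_le_ne_top one_ne_top (hwM (μ n) (hμ n)))⟩
  obtain ⟨m', -, φ, hφ, hlim⟩ := hcomp.isSeqCompact fun n =>
    subset_closure (show m n ∈ weightedMeasures w M from ⟨μ n, hμ n, rfl⟩)
  exact ⟨φ, hφ, _, hw.memMO_withDensity_inv hwc.measurable m',
    hw.moTendsto_of_tendsto hwc (fun _ => rfl) hlim⟩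

lemma isMORelSeqCompact_iff_forall_isMOTightAt [BorelSpace S] [CompleteSpace S]
    [TopologicalSpace.SeparableSpace S] (hM : ∀ μ ∈ M, MemMO C μ) :
    IsMORelSeqCompact C M ↔ ∀ r > 0, IsMOTightAt C M r :=
  ⟨fun h _ hr => h.isMOTightAt hM hr, isMORelSeqCompact_of_forall_isMOTightAt⟩

end RelativeCompactness

theorem stmt8_general [BorelSpace S] [CompleteSpace S] [TopologicalSpace.SeparableSpace S]
    (C : Set S) (M : Set (Measure S)) (hM : ∀ μ ∈ M, MemMO C μ) :
    IsMORelSeqCompact C M ↔ ∃ r : ℕ → ℝ, StrictAnti r ∧ (∀ i, 0 < r i) ∧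
      Tendsto r atTop (𝓝 0) ∧ ∀ i, IsMOTightAt C M (r i) :=
  (isMORelSeqCompact_iff_forall_isMOTightAt hM).trans forall_isMOTightAt_iff_exists_seq

/-- Prohorov-type characterization of relative compactness in `M_O`: every sequence in
`M ⊆ M_O` has a subsequence converging in `M_O` iff there is a sequence `r_i ↓ 0` such
that for each `i` the masses of `S \ C^{r_i}` are uniformly bounded over `M` and a
uniform tightness condition holds on `S \ C^{r_i}`. -/
theorem stmt8 [BorelSpace S] [CompleteSpace S] [TopologicalSpace.SeparableSpace S]
    (C : Set S) (hC : IsClosed C)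
    (M : Set (Measure S)) (hM : ∀ μ ∈ M, MemMO C μ) :
    (∀ μseq : ℕ → Measure S, (∀ n, μseq n ∈ M) →
        ∃ φ : ℕ → ℕ, StrictMono φ ∧ ∃ ν : Measure S, MemMO C ν ∧
          MOTendsto C (fun n => μseq (φ n)) ν)
    ↔
    (∃ r : ℕ → ℝ, StrictAnti r ∧ (∀ i, 0 < r i) ∧ Tendsto r atTop (𝓝 0) ∧
      ∀ i, (⨆ μ ∈ M, μ {x | r i ≤ infDist x C}) < ⊤ ∧
        ∀ η : ℝ≥0∞, 0 < η → ∃ K : Set S, IsCompact K ∧ K ⊆ {x | r i ≤ infDist x C} ∧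
          ∀ μ ∈ M, μ ({x | r i ≤ infDist x C} \ K) ≤ η) := by
  exact stmt8_general C M hM
end
end

section
/- Fix j ≥ 1 and let C_{≤j} = {x ∈ ℝ_+^∞ : at most j coordinates of x are positive} (a closed subset of ℝ_+^∞) and O_j = ℝ_+^∞ \ C_{≤j}. For m ≥ j, indices i_1 < ... < i_m and a_1, ..., a_m > 0, let A_{m,i,a} = {x ∈ ℝ_+^∞ : x_{i_k} > a_k for k = 1, ..., m}, and let 𝔸_{≥j} denote the collection of all such sets. If μ_t (t > 0) and μ are elements of M(O_j) and lim_{t→∞} μ_t(A) = μ(A) for every A ∈ 𝔸_{≥j} that is bounded away from C_{≤j} and satisfies μ(∂A) = 0, then μ_t → μ in M(O_j) as t → ∞. -/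
open MeasureTheory Filter Topology Set ENNReal NNReal

noncomputable section

/-- The metric `d_∞` on `ℝ₊^∞ = (ℕ → ℝ≥0)` (indices shifted so that `x_1 = x 0`):
`d_∞(x,y) = Σ_{i≥1} 2^{-i} (|x_i − y_i| ∧ 1)`. -/
def dseq (x y : ℕ → ℝ≥0) : ℝ := ∑' i : ℕ, (2 : ℝ)⁻¹ ^ (i + 1) * min (dist (x i) (y i)) 1

/-- The `d_∞`-distance from a point to a set. -/
def dseqSet (x : ℕ → ℝ≥0) (C : Set (ℕ → ℝ≥0)) : ℝ := sInf (dseq x '' C)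

/-- `A` is bounded away from `C` in the metric `d_∞`. -/
def BddAwaySeq (C A : Set (ℕ → ℝ≥0)) : Prop := ∃ r > 0, ∀ x ∈ A, r ≤ dseqSet x C

/-- The class `C(ℝ₊^∞ \ C)` of test functions: bounded, nonnegative, continuous off `C`,
vanishing at `d_∞`-distance `< r` from `C` for some `r > 0`. -/
def IsCOseq (C : Set (ℕ → ℝ≥0)) (f : (ℕ → ℝ≥0) → ℝ) : Prop :=
  ContinuousOn f Cᶜ ∧ (∀ x, 0 ≤ f x) ∧ (∃ B : ℝ, ∀ x, f x ≤ B) ∧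
    ∃ r > 0, ∀ x, dseqSet x C < r → f x = 0

/-- The class `M(ℝ₊^∞ \ C)`: Borel measures giving no mass to `C` and finite mass to
each region at `d_∞`-distance at least `r > 0` from `C`. -/
def MemMOseq (C : Set (ℕ → ℝ≥0)) (μ : Measure (ℕ → ℝ≥0)) : Prop :=
  μ C = 0 ∧ ∀ r : ℝ, 0 < r → μ {x | r ≤ dseqSet x C} < ⊤

/-- Convergence in `M(ℝ₊^∞ \ C)`. -/
def MOTendstoSeq (C : Set (ℕ → ℝ≥0)) (μn : ℕ → Measure (ℕ → ℝ≥0))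
    (μ : Measure (ℕ → ℝ≥0)) : Prop :=
  ∀ f : (ℕ → ℝ≥0) → ℝ, IsCOseq C f →
    Tendsto (fun n => ∫ x, f x ∂ μn n) atTop (𝓝 (∫ x, f x ∂ μ))

/-- `C_{≤j}`: sequences with at most `j` positive coordinates. -/
def Cle (j : ℕ) : Set (ℕ → ℝ≥0) :=
  {x | {i | x i ≠ 0}.Finite ∧ {i | x i ≠ 0}.ncard ≤ j}

/-! The orthants that constrain more than `j` coordinates, at levels whose hyperplanes are
`μ`-null, form a π-system of sets bounded away from `C_{≤j}` on which the hypothesis gives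
convergence. By inclusion–exclusion it extends to differences of one orthant and finitely many
others; these form a π-system too, and they contain arbitrarily small neighbourhoods of every
point off `C_{≤j}`. A point at distance at least `r` from `C_{≤j}` exceeds a level of order `r` in
more than `j` of its first `N` coordinates, with `N` depending on `r` only, so a test function
vanishes off a finite union of orthants. There all measures are finite and their masses converge,
and normalising reduces the claim to the π-system criterion for weak convergence of probability
measures. -/

section PiSystem

variable {ι Ω : Type*}

lemma isPiSystem_setOf_image_mem {α : Type*} {S : Set (Set Ω)} (hS : IsPiSystem S) {g : α → Ω}
    (hg : g.Injective) : IsPiSystem {t | g '' t ∈ S} := by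
  intro t ht t' ht' hne
  rw [mem_ofPred_eq, image_inter hg]
  refine hS _ ht _ ht' ?_
  rw [← image_inter hg]
  exact hne.image g

/-- The differences `A \ (B₁ ∪ ⋯ ∪ Bₙ)` of a member and finitely many members of `P`. Convergence
of measures passes from a π-system to this family, which can contain arbitrarily small sets even if
all members of `P` are large. -/
def finiteDiff (P : Set (Set Ω)) : Set (Set Ω) :=
  {D | ∃ A ∈ P, ∃ T : Finset (Set Ω), ↑T ⊆ P ∧ D = A \ ⋃ B ∈ T, B}

theorem isPiSystem_finiteDiff {P : Set (Set Ω)} (hP : IsPiSystem P) :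
    IsPiSystem (finiteDiff P) := by
  classical
  rintro _ ⟨A, hA, T, hT, rfl⟩ _ ⟨A', hA', T', hT', rfl⟩ hne
  refine ⟨A ∩ A', hP A hA A' hA' (hne.mono fun x hx => ⟨hx.1.1, hx.2.1⟩), T ∪ T', ?_, ?_⟩
  · simpa using ⟨hT, hT'⟩
  · rw [Finset.set_biUnion_union]
    ext x
    simp only [mem_inter_iff, Set.mem_sdiff, mem_union]
    tauto

variable [MeasurableSpace Ω] {l : Filter ι}

theorem tendsto_finiteMeasure_of_isPiSystem [TopologicalSpace Ω] [SecondCountableTopology Ω]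
    [OpensMeasurableSpace Ω] [l.IsCountablyGenerated] {S : Set (Set Ω)} (hS : IsPiSystem S)
    (hmeas : ∀ s ∈ S, MeasurableSet s)
    (hnhds : ∀ u, IsOpen u → ∀ x ∈ u, ∃ s ∈ S, s ∈ 𝓝 x ∧ s ⊆ u)
    {μ : ι → FiniteMeasure Ω} {ν : FiniteMeasure Ω}
    (hlim : ∀ s ∈ S, Tendsto (fun i => μ i s) l (𝓝 (ν s)))
    (hmass : Tendsto (fun i => (μ i).mass) l (𝓝 ν.mass)) : Tendsto μ l (𝓝 ν) := by
  rcases eq_or_ne ν 0 with rfl | hν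
  · exact FiniteMeasure.tendsto_zero_of_tendsto_zero_mass (by simpa using hmass)
  have hne : Nonempty Ω := by
    by_contra hΩ
    rw [not_nonempty_iff] at hΩ
    exact hν (ν.mass_zero_iff.1 (by simp [FiniteMeasure.mass, univ_eq_empty_iff.2 hΩ]))
  have hmass_ne : ν.mass ≠ 0 := ν.mass_nonzero_iff.2 hν
  refine FiniteMeasure.tendsto_of_tendsto_normalize_testAgainstNN_of_tendsto_mass ?_ hmass
  refine hS.tendsto_probabilityMeasure_of_tendsto_of_mem hmeas hnhds fun s hs => ?_
  rw [FiniteMeasure.normalize_eq_of_nonzero ν hν]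
  refine ((hmass.inv₀ hmass_ne).mul (hlim s hs)).congr' ?_
  filter_upwards [hmass.eventually_ne hmass_ne] with i hi
  rw [FiniteMeasure.normalize_eq_of_nonzero _ ((FiniteMeasure.mass_nonzero_iff _).1 hi)]

theorem tendsto_integral_of_isPiSystem [TopologicalSpace Ω] [SecondCountableTopology Ω]
    [OpensMeasurableSpace Ω] [l.IsCountablyGenerated] {S : Set (Set Ω)} (hS : IsPiSystem S)
    (hmeas : ∀ s ∈ S, MeasurableSet s) {U : Set Ω} (hU : IsOpen U)
    (hnhds : ∀ x ∈ U, ∀ V ∈ 𝓝 x, ∃ s ∈ S, s ∈ 𝓝 x ∧ s ⊆ V)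
    {μ : ι → Measure Ω} {ν : Measure Ω} (hμU : ∀ i, μ i U ≠ ∞) (hνU : ν U ≠ ∞)
    (hlim : ∀ s ∈ S, Tendsto (fun i => (μ i).real s) l (𝓝 (ν.real s)))
    (hlimU : Tendsto (fun i => (μ i).real U) l (𝓝 (ν.real U)))
    {f : Ω → ℝ} (hf : ContinuousOn f U) {B : ℝ} (hfB : ∀ x ∈ U, |f x| ≤ B)
    (hf_zero : ∀ x ∉ U, f x = 0) :
    Tendsto (fun i => ∫ x, f x ∂μ i) l (𝓝 (∫ x, f x ∂ν)) := by
  have hcomap (ρ : Measure Ω) (t : Set U) : ρ.comap (↑) t = ρ ((↑) '' t) :=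
    comap_subtype_coe_apply hU.measurableSet ρ t
  let restr (ρ : Measure Ω) (hρ : ρ U ≠ ∞) : FiniteMeasure U :=
    ⟨ρ.comap (↑), ⟨by rw [hcomap, image_univ, Subtype.range_coe]; exact hρ.lt_top⟩⟩
  have hrestr (ρ : Measure Ω) (hρ : ρ U ≠ ∞) (t : Set U) :
      (restr ρ hρ t : ℝ) = ρ.real ((↑) '' t) := congrArg ENNReal.toReal (hcomap ρ t)
  have hconv : Tendsto (fun i => restr (μ i) (hμU i)) l (𝓝 (restr ν hνU)) := by
    refine tendsto_finiteMeasure_of_isPiSystem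
      (isPiSystem_setOf_image_mem hS Subtype.val_injective) ?_ ?_ ?_ ?_
    · intro t ht
      exact (MeasurableEmbedding.subtype_coe hU.measurableSet).measurableSet_image.1 (hmeas _ ht)
    · intro u hu x hx
      obtain ⟨s, hs, hsx, hsu⟩ := hnhds x x.2 _
        (hU.isOpenMap_subtype_val.image_mem_nhds (hu.mem_nhds hx))
      have hs_eq : (↑) '' ((↑) ⁻¹' s : Set U) = s := by
        rw [Subtype.image_preimage_coe, inter_eq_right]
        exact hsu.trans (Subtype.coe_image_subset U u)
      refine ⟨(↑) ⁻¹' s, by rwa [mem_ofPred_eq, hs_eq],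
        continuousAt_subtype_val.preimage_mem_nhds hsx, ?_⟩
      exact fun y hy => by simpa using hsu hy
    · intro t ht
      rw [← NNReal.tendsto_coe]
      simpa only [hrestr] using hlim _ ht
    · rw [← NNReal.tendsto_coe]
      simpa [FiniteMeasure.mass, hrestr] using hlimU
  have hint (ρ : Measure Ω) : ∫ x, f x ∂ρ = ∫ x : U, f x ∂ρ.comap (↑) := by
    rw [integral_subtype_comap hU.measurableSet,
      setIntegral_eq_integral_of_forall_compl_eq_zero hf_zero]
  let g : BoundedContinuousFunction U ℝ :=
    .ofNormedAddCommGroup (U.domRestrict f) hf.domRestrict B fun x => hfB x x.2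
  simp only [hint]
  exact FiniteMeasure.tendsto_iff_forall_integral_tendsto.1 hconv g

lemma measurableSet_of_mem_finiteDiff {P : Set (Set Ω)} (hmeas : ∀ A ∈ P, MeasurableSet A)
    {D : Set Ω} (hD : D ∈ finiteDiff P) : MeasurableSet D := by
  obtain ⟨A, hA, T, hT, rfl⟩ := hD
  exact (hmeas A hA).diff (T.measurableSet_biUnion fun B hB => hmeas B (hT hB))

theorem tendsto_measureReal_of_mem_finiteDiff {P : Set (Set Ω)} (hP : IsPiSystem P)
    (hmeas : ∀ A ∈ P, MeasurableSet A) {μ : ι → Measure Ω} {ν : Measure Ω}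
    (hμ : ∀ A ∈ P, ∀ i, μ i A ≠ ∞) (hν : ∀ A ∈ P, ν A ≠ ∞)
    (hlim : ∀ A ∈ P, Tendsto (fun i => (μ i).real A) l (𝓝 (ν.real A)))
    {D : Set Ω} (hD : D ∈ finiteDiff P) : Tendsto (fun i => (μ i).real D) l (𝓝 (ν.real D)) := by
  classical
  obtain ⟨A, hA, T, hT, rfl⟩ := hD
  have hT_meas : MeasurableSet (⋃ B ∈ T, B) := T.measurableSet_biUnion fun B hB => hmeas B (hT hB)
  have hAT : ∀ B ∈ insert A T, B ∈ P := by
    simpa [hA] using fun B hB => hT hB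
  have hdiff (ρ : Measure Ω) (hρ : ∀ B ∈ P, ρ B ≠ ∞) :
      ρ.real (A \ ⋃ B ∈ T, B) = ρ.real (⋃ B ∈ insert A T, B) - ρ.real (⋃ B ∈ T, B) := by
    rw [Finset.set_biUnion_insert]
    refine measureReal_sdiff' hT_meas (hρ A hA) ?_
    exact (measure_biUnion_lt_top T.finite_toSet fun B hB => (hρ B (hT hB)).lt_top).ne
  simp only [hdiff ν hν, fun i => hdiff (μ i) fun B hB => hμ B hB i]
  exact (hP.tendsto_measureReal_biUnion hAT hmeas hlim hν hμ).sub
    (hP.tendsto_measureReal_biUnion hT hmeas hlim hν hμ)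

theorem tendsto_integral_of_isPiSystem_of_isOpen [TopologicalSpace Ω] [SecondCountableTopology Ω]
    [OpensMeasurableSpace Ω] [l.IsCountablyGenerated] {P : Set (Set Ω)} (hP : IsPiSystem P)
    (hopen : ∀ A ∈ P, IsOpen A) {T : Finset (Set Ω)} (hT : ↑T ⊆ P)
    (hnhds : ∀ x ∈ ⋃ A ∈ T, A, ∀ V ∈ 𝓝 x, ∃ D ∈ finiteDiff P, D ∈ 𝓝 x ∧ D ⊆ V)
    {μ : ι → Measure Ω} {ν : Measure Ω} (hμ : ∀ A ∈ P, ∀ i, μ i A ≠ ∞) (hν : ∀ A ∈ P, ν A ≠ ∞)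
    (hlim : ∀ A ∈ P, Tendsto (fun i => (μ i).real A) l (𝓝 (ν.real A)))
    {f : Ω → ℝ} (hf : ContinuousOn f (⋃ A ∈ T, A)) {B : ℝ} (hfB : ∀ x, |f x| ≤ B)
    (hf_zero : ∀ x ∉ ⋃ A ∈ T, A, f x = 0) :
    Tendsto (fun i => ∫ x, f x ∂μ i) l (𝓝 (∫ x, f x ∂ν)) := by
  have hmeas : ∀ A ∈ P, MeasurableSet A := fun A hA => (hopen A hA).measurableSet
  have hfin (ρ : Measure Ω) (hρ : ∀ A ∈ P, ρ A ≠ ∞) : ρ (⋃ A ∈ T, A) ≠ ∞ :=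
    (measure_biUnion_lt_top T.finite_toSet fun A hA => (hρ A (hT hA)).lt_top).ne
  exact tendsto_integral_of_isPiSystem (isPiSystem_finiteDiff hP)
    (fun _ hD => measurableSet_of_mem_finiteDiff hmeas hD)
    (isOpen_biUnion fun A hA => hopen A (hT hA)) hnhds
    (fun i => hfin (μ i) fun A hA => hμ A hA i) (hfin ν hν)
    (fun _ hD => tendsto_measureReal_of_mem_finiteDiff hP hmeas hμ hν hlim hD)
    (hP.tendsto_measureReal_biUnion hT hmeas hlim hν hμ) hf (fun x _ => hfB x) hf_zero

end PiSystem

section Orthant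

variable {ι α : Type*}

/-- The set of points whose `i`-th coordinate exceeds `a i` for every `i ∈ F`. For
`F = {i_1 < ⋯ < i_m}` this is `A_{m,i,a}`; the values of `a` off `F` are irrelevant. -/
def orthant [LT α] (F : Finset ι) (a : ι → α) : Set (ι → α) := {x | ∀ i ∈ F, a i < x i}

lemma orthant_inter_orthant [DecidableEq ι] [LinearOrder α] (F G : Finset ι) (a b : ι → α) :
    orthant F a ∩ orthant G b = orthant (F ∪ G) (F.piecewise (G.piecewise (a ⊔ b) a) b) := by
  ext x
  simp only [orthant, mem_inter_iff, mem_ofPred_eq, ← forall_and, Finset.mem_union]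
  refine forall_congr' fun i => ?_
  by_cases hF : i ∈ F <;> by_cases hG : i ∈ G <;> simp [hF, hG]

lemma orthant_eq_setOf_orderEmbOfFin [LinearOrder ι] [LT α] (F : Finset ι) (a : ι → α) :
    orthant F a = {x | ∀ k, a (F.orderEmbOfFin rfl k) < x (F.orderEmbOfFin rfl k)} := by
  ext x
  have hrange : ∀ i, i ∈ F ↔ i ∈ range (F.orderEmbOfFin rfl) := by simp
  simp only [orthant, hrange, forall_mem_range]

variable [TopologicalSpace α] [LinearOrder α] [OrderClosedTopology α]

lemma isOpen_orthant (F : Finset ι) (a : ι → α) : IsOpen (orthant F a) := by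
  simp only [orthant, ofPred_forall]
  exact isOpen_biInter_finset fun i _ => isOpen_lt continuous_const (continuous_apply i)

lemma frontier_orthant_subset (F : Finset ι) (a : ι → α) :
    frontier (orthant F a) ⊆ ⋃ i ∈ F, {x | x i = a i} := by
  rw [(isOpen_orthant F a).frontier_eq]
  rintro x ⟨hx, hx_notMem⟩
  have hle : closure (orthant F a) ⊆ ⋂ i ∈ F, {x | a i ≤ x i} :=
    closure_minimal (fun z hz => mem_iInter₂.2 fun i hi => (hz i hi).le)
      (isClosed_biInter fun i _ => isClosed_le continuous_const (continuous_apply i))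
  obtain ⟨i, hi, hxi⟩ : ∃ i ∈ F, x i ≤ a i := by simpa [orthant] using hx_notMem
  exact mem_iUnion₂.2 ⟨i, hi, hxi.antisymm (mem_iInter₂.1 (hle hx) i hi)⟩

end Orthant

section Distance

lemma hasSum_inv_two_pow_succ : HasSum (fun i : ℕ => (2 : ℝ)⁻¹ ^ (i + 1)) 1 := by
  simpa [pow_succ'] using hasSum_geometric_two.mul_left (2 : ℝ)⁻¹

lemma summable_dseq (x y : ℕ → ℝ≥0) :
    Summable fun i : ℕ => (2 : ℝ)⁻¹ ^ (i + 1) * min (dist (x i) (y i)) 1 :=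
  .of_nonneg_of_le (fun i => by positivity)
    (fun i => mul_le_of_le_one_right (by positivity) (min_le_right _ _))
    hasSum_inv_two_pow_succ.summable

lemma le_dseq (x y : ℕ → ℝ≥0) (i : ℕ) :
    (2 : ℝ)⁻¹ ^ (i + 1) * min (dist (x i) (y i)) 1 ≤ dseq x y :=
  (summable_dseq x y).le_tsum i fun _ _ => by positivity

lemma dseq_le_of_forall_lt {x y : ℕ → ℝ≥0} {N : ℕ} {ε : ℝ} (hε : 0 ≤ ε)
    (h : ∀ i < N, dist (x i) (y i) ≤ ε) : dseq x y ≤ ε + 2⁻¹ ^ N := by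
  have hw := hasSum_inv_two_pow_succ
  have hhead : ∑ i ∈ Finset.range N, (2 : ℝ)⁻¹ ^ (i + 1) * min (dist (x i) (y i)) 1 ≤ ε :=
    calc
      _ ≤ ∑ i ∈ Finset.range N, (2 : ℝ)⁻¹ ^ (i + 1) * ε := by
        gcongr with i hi
        exact (min_le_left _ _).trans (h i (Finset.mem_range.1 hi))
      _ = (∑ i ∈ Finset.range N, (2 : ℝ)⁻¹ ^ (i + 1)) * ε := (Finset.sum_mul ..).symm
      _ ≤ ε := mul_le_of_le_one_left hε (sum_le_hasSum _ (fun i _ => by positivity) hw)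
  have htail : HasSum (fun i => (2 : ℝ)⁻¹ ^ (i + N + 1)) (2⁻¹ ^ N) := by
    simpa [pow_add, mul_comm, mul_assoc, mul_left_comm] using hw.mul_left ((2 : ℝ)⁻¹ ^ N)
  rw [dseq, ← (summable_dseq x y).sum_add_tsum_nat_add N]
  refine add_le_add hhead (hasSum_le (fun i => ?_)
    ((_root_.summable_nat_add_iff N).2 (summable_dseq x y)).hasSum htail)
  exact mul_le_of_le_one_right (by positivity) (min_le_right _ _)

variable {C A : Set (ℕ → ℝ≥0)}

lemma dseqSet_le_dseq (x : ℕ → ℝ≥0) {y : ℕ → ℝ≥0} (hy : y ∈ C) : dseqSet x C ≤ dseq x y := by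
  refine csInf_le ⟨0, ?_⟩ (mem_image_of_mem _ hy)
  rintro _ ⟨z, -, rfl⟩
  exact tsum_nonneg fun i => by positivity

lemma BddAwaySeq.subset_compl (hA : BddAwaySeq C A) : A ⊆ Cᶜ := by
  obtain ⟨r, hr, hrA⟩ := hA
  intro x hxA hxC
  have hle : dseqSet x C ≤ 0 := by simpa [dseq] using dseqSet_le_dseq x hxC
  exact (hr.trans_le (hrA x hxA)).not_ge hle

lemma MemMOseq.measure_ne_top {ν : Measure (ℕ → ℝ≥0)} (hν : MemMOseq C ν)
    (hA : BddAwaySeq C A) : ν A ≠ ∞ := by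
  obtain ⟨r, hr, hrA⟩ := hA
  exact ((measure_mono hrA).trans_lt (hν.2 r hr)).ne

end Distance

section FewPositiveCoordinates

variable {j : ℕ}

lemma bddAwaySeq_Cle_orthant {F : Finset ℕ} {a : ℕ → ℝ≥0} (hF : j < F.card)
    (ha : ∀ i ∈ F, 0 < a i) : BddAwaySeq (Cle j) (orthant F a) := by
  let w (i : ℕ) : ℝ := 2⁻¹ ^ (i + 1) * min (a i : ℝ) 1
  obtain ⟨q, hq, hmin⟩ := F.exists_min_image w (Finset.card_pos.1 (Nat.zero_lt_of_lt hF))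
  have hq_pos : (0 : ℝ) < a q := ha q hq
  refine ⟨w q, by positivity, fun x hx => le_csInf ⟨_, mem_image_of_mem _ (?_ : 0 ∈ Cle j)⟩ ?_⟩
  · simp [Cle]
  rintro _ ⟨y, ⟨hy_fin, hy_card⟩, rfl⟩
  obtain ⟨i, hi, hyi⟩ : ∃ i ∈ F, y i = 0 := by
    by_contra! hy
    have hcard := ncard_le_ncard (s := (F : Set ℕ)) (t := {i | y i ≠ 0}) hy hy_fin
    rw [ncard_coe_finset] at hcard
    omega
  have hdist : (a i : ℝ) ≤ dist (x i) (y i) := by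
    simpa [hyi, NNReal.dist_eq] using (hx i hi).le
  calc
    w q ≤ w i := hmin i hi
    _ ≤ 2⁻¹ ^ (i + 1) * min (dist (x i) (y i)) 1 :=
      mul_le_mul_of_nonneg_left (min_le_min_right 1 hdist) (by positivity)
    _ ≤ dseq x y := le_dseq x y i

lemma exists_card_eq_of_notMem_Cle {x : ℕ → ℝ≥0} (hx : x ∉ Cle j) :
    ∃ G : Finset ℕ, G.card = j + 1 ∧ ∀ i ∈ G, 0 < x i := by
  suffices ∃ G : Finset ℕ, ↑G ⊆ {i | x i ≠ 0} ∧ G.card = j + 1 by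
    obtain ⟨G, hG, hG_card⟩ := this
    exact ⟨G, hG_card, fun i hi => pos_iff_ne_zero.2 (hG hi)⟩
  by_cases hfin : {i | x i ≠ 0}.Finite
  · have hcard : j + 1 ≤ {i | x i ≠ 0}.ncard := not_le.1 fun hle => hx ⟨hfin, hle⟩
    rw [ncard_eq_toFinset_card _ hfin] at hcard
    obtain ⟨G, hG, hG_card⟩ := Finset.exists_subset_card_eq hcard
    exact ⟨G, fun i hi => hfin.mem_toFinset.1 (hG hi), hG_card⟩
  · exact Set.Infinite.exists_subset_card_eq hfin (j + 1)

lemma dseqSet_Cle_pos {x : ℕ → ℝ≥0} (hx : x ∉ Cle j) : 0 < dseqSet x (Cle j) := by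
  obtain ⟨G, hG, hpos⟩ := exists_card_eq_of_notMem_Cle hx
  obtain ⟨r, hr, hle⟩ := bddAwaySeq_Cle_orthant (j := j) (F := G) (a := fun i => x i / 2)
    (by omega) fun i hi => half_pos (hpos i hi)
  exact hr.trans_le (hle x fun i hi => NNReal.half_lt_self (hpos i hi).ne')

lemma dseqSet_Cle_le {x : ℕ → ℝ≥0} {F : Finset ℕ} (hF : F.card ≤ j) {N : ℕ} {ε : ℝ≥0}
    (h : ∀ i < N, i ∉ F → x i ≤ ε) : dseqSet x (Cle j) ≤ ε + 2⁻¹ ^ N := by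
  have hsub : {i | F.piecewise x 0 i ≠ 0} ⊆ F := fun i hi => by
    by_contra hiF
    exact hi (F.piecewise_eq_of_notMem _ _ hiF)
  have hmem : F.piecewise x 0 ∈ Cle j :=
    ⟨F.finite_toSet.subset hsub,
      (ncard_le_ncard hsub F.finite_toSet).trans (by rwa [ncard_coe_finset])⟩
  refine (dseqSet_le_dseq x hmem).trans (dseq_le_of_forall_lt ε.2 fun i hi => ?_)
  by_cases hiF : i ∈ F
  · simp [hiF]
  · simpa [hiF, NNReal.dist_eq] using h i hi hiF

lemma sigmaFinite_of_memMOseq_Cle {μ : Measure (ℕ → ℝ≥0)} (hμ : MemMOseq (Cle j) μ) :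
    SigmaFinite μ := by
  refine ⟨⟨⟨fun n : ℕ => Cle j ∪ {x | 1 / ((n : ℝ) + 1) ≤ dseqSet x (Cle j)},
    fun _ => mem_univ _, fun n => ?_, eq_univ_of_forall fun x => mem_iUnion.2 ?_⟩⟩⟩
  · refine (measure_union_le _ _).trans_lt ?_
    rw [hμ.1, zero_add]
    exact hμ.2 _ (by positivity)
  · by_cases hx : x ∈ Cle j
    · exact ⟨0, Or.inl hx⟩
    · obtain ⟨n, hn⟩ := exists_nat_one_div_lt (dseqSet_Cle_pos hx)
      exact ⟨n, Or.inr hn.le⟩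

end FewPositiveCoordinates

section ContinuityOrthants

/-- A positive level `c` such that `μ` gives no mass to the hyperplane `{x | x i = c}`. -/
def IsContLevel (μ : Measure (ℕ → ℝ≥0)) (i : ℕ) (c : ℝ≥0) : Prop := 0 < c ∧ μ {x | x i = c} = 0

/-- The orthants on more than `j` coordinates, all of whose levels are continuity levels of `μ`:
members of `𝔸_{≥j}` that are bounded away from `C_{≤j}` and have a `μ`-null boundary. -/
def contOrthants (j : ℕ) (μ : Measure (ℕ → ℝ≥0)) : Set (Set (ℕ → ℝ≥0)) :=
  {A | ∃ F a, j < F.card ∧ (∀ i ∈ F, IsContLevel μ i (a i)) ∧ A = orthant F a}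

variable {j : ℕ} {μ : Measure (ℕ → ℝ≥0)} {A : Set (ℕ → ℝ≥0)}

lemma isOpen_of_mem_contOrthants (hA : A ∈ contOrthants j μ) : IsOpen A := by
  obtain ⟨F, a, -, -, rfl⟩ := hA
  exact isOpen_orthant F a

lemma bddAwaySeq_of_mem_contOrthants (hA : A ∈ contOrthants j μ) : BddAwaySeq (Cle j) A := by
  obtain ⟨F, a, hF, ha, rfl⟩ := hA
  exact bddAwaySeq_Cle_orthant hF fun i hi => (ha i hi).1

lemma measure_frontier_of_mem_contOrthants (hA : A ∈ contOrthants j μ) : μ (frontier A) = 0 := by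
  obtain ⟨F, a, -, ha, rfl⟩ := hA
  exact measure_mono_null (frontier_orthant_subset F a)
    ((measure_biUnion_null_iff F.countable_toSet).2 fun i hi => (ha i hi).2)

lemma exists_eq_setOf_of_mem_contOrthants (hA : A ∈ contOrthants j μ) :
    ∃ m, j ≤ m ∧ ∃ iv : Fin m → ℕ, StrictMono iv ∧ ∃ a : Fin m → ℝ≥0, (∀ k, 0 < a k) ∧
      A = {x | ∀ k, a k < x (iv k)} := by
  obtain ⟨F, a, hF, ha, rfl⟩ := hA
  exact ⟨F.card, hF.le, F.orderEmbOfFin rfl, (F.orderEmbOfFin rfl).strictMono, fun k => a _,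
    fun k => (ha _ (F.orderEmbOfFin_mem rfl k)).1, orthant_eq_setOf_orderEmbOfFin F a⟩

lemma inter_orthant_mem_contOrthants (hA : A ∈ contOrthants j μ) {G : Finset ℕ} {b : ℕ → ℝ≥0}
    (hb : ∀ i ∈ G, IsContLevel μ i (b i)) : A ∩ orthant G b ∈ contOrthants j μ := by
  obtain ⟨F, a, hF, ha, rfl⟩ := hA
  refine ⟨F ∪ G, _, hF.trans_le (Finset.card_le_card Finset.subset_union_left), fun i hi => ?_,
    orthant_inter_orthant F G a b⟩
  by_cases hiF : i ∈ F <;> by_cases hiG : i ∈ G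
  · rcases max_choice (a i) (b i) with h | h <;> simp [hiF, hiG, h, ha, hb]
  · simpa [hiF, hiG] using ha i hiF
  · simpa [hiF] using hb i hiG
  · simp [hiF, hiG] at hi

lemma isPiSystem_contOrthants : IsPiSystem (contOrthants j μ) := by
  rintro A hA _ ⟨G, b, -, hb, rfl⟩ -
  exact inter_orthant_mem_contOrthants hA hb

variable [SigmaFinite μ]

lemma exists_isContLevel_between (i : ℕ) {u v : ℝ≥0} (huv : u < v) :
    ∃ c, IsContLevel μ i c ∧ u < c ∧ c < v := by
  have hcount : {c : ℝ≥0 | 0 < μ {x : ℕ → ℝ≥0 | x i = c}}.Countable :=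
    Measure.countable_meas_level_set_pos (measurable_pi_apply i)
  obtain ⟨c, hc, huc, hcv⟩ := ((hcount.image NNReal.toReal).dense_compl ℝ).exists_between
    (NNReal.coe_lt_coe.2 huv)
  lift c to ℝ≥0 using u.coe_nonneg.trans huc.le
  have huc : u < c := NNReal.coe_lt_coe.1 huc
  refine ⟨c, ⟨huc.bot_lt, ?_⟩, huc, NNReal.coe_lt_coe.1 hcv⟩
  by_contra h
  exact hc ⟨c, pos_iff_ne_zero.2 h, rfl⟩

lemma exists_finset_contOrthants_cover (j : ℕ) {r : ℝ} (hr : 0 < r) :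
    ∃ T : Finset (Set (ℕ → ℝ≥0)), ↑T ⊆ contOrthants j μ ∧
      {x | r ≤ dseqSet x (Cle j)} ⊆ ⋃ A ∈ T, A := by
  classical
  lift r to ℝ≥0 using hr.le
  obtain ⟨N, hN⟩ := exists_pow_lt_of_lt_one (half_pos hr) (show (2 : ℝ)⁻¹ < 1 by norm_num)
  choose a ha _ har using fun i => exists_isContLevel_between (μ := μ) i (half_pos hr)
  refine ⟨((Finset.range N).powersetCard (j + 1)).image (orthant · a), ?_, fun x hx => ?_⟩
  · intro A hA
    obtain ⟨F, hF, rfl⟩ := Finset.mem_image.1 hA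
    exact ⟨F, a, by simp [(Finset.mem_powersetCard.1 hF).2], fun i _ => ha i, rfl⟩
  have hcard : j + 1 ≤ {i ∈ Finset.range N | a i < x i}.card := by
    by_contra! hlt
    have hle : dseqSet x (Cle j) ≤ (r / 2 : ℝ≥0) + 2⁻¹ ^ N :=
      dseqSet_Cle_le (Nat.le_of_lt_succ hlt) fun i hi hxi => by
        simp only [Finset.mem_filter, Finset.mem_range, hi, true_and, not_lt] at hxi
        exact hxi.trans (har i).le
    have hrx : (r : ℝ) ≤ dseqSet x (Cle j) := hx
    push_cast at hle
    linarith
  obtain ⟨F, hF, hF_card⟩ := Finset.exists_subset_card_eq hcard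
  refine mem_iUnion₂.2 ⟨orthant F a, Finset.mem_image_of_mem _ (Finset.mem_powersetCard.2
    ⟨hF.trans (Finset.filter_subset _ _), hF_card⟩), fun i hi => ?_⟩
  exact (Finset.mem_filter.1 (hF hi)).2

-- Continuity levels are positive, so none of them lies below `y = 0`: hence the guards `0 < y`.
lemma exists_isContLevel_of_mem_nhds (i : ℕ) {y : ℝ≥0} {u : Set ℝ≥0} (hu : u ∈ 𝓝 y) :
    ∃ a b, IsContLevel μ i a ∧ IsContLevel μ i b ∧ (0 < y → a < y) ∧ y < b ∧
      ∀ z ≤ b, (0 < y → a < z) → z ∈ u := by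
  obtain ⟨d, hyd, hdu⟩ := exists_Ico_subset_of_mem_nhds hu ⟨y + 1, by simp⟩
  obtain ⟨b, hb, hyb, hbd⟩ := exists_isContLevel_between (μ := μ) i hyd
  rcases eq_zero_or_pos y with rfl | hy
  · exact ⟨b, b, hb, hb, fun h => absurd h (lt_irrefl _), hyb,
      fun z hzb _ => hdu ⟨zero_le, hzb.trans_lt hbd⟩⟩
  obtain ⟨c, hcy, hcu⟩ := exists_Ioc_subset_of_mem_nhds hu ⟨0, hy⟩
  obtain ⟨a, ha, hca, hay⟩ := exists_isContLevel_between (μ := μ) i hcy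
  refine ⟨a, b, ha, hb, fun _ => hay, hyb, fun z hzb haz => ?_⟩
  rcases le_total z y with hzy | hyz
  · exact hcu ⟨hca.trans (haz hy), hzy⟩
  · exact hdu ⟨hyz, hzb.trans_lt hbd⟩

lemma exists_mem_finiteDiff_contOrthants_of_mem_nhds {x : ℕ → ℝ≥0} (hx : x ∉ Cle j)
    {V : Set (ℕ → ℝ≥0)} (hV : V ∈ 𝓝 x) :
    ∃ D ∈ finiteDiff (contOrthants j μ), D ∈ 𝓝 x ∧ D ⊆ V := by
  classical
  obtain ⟨I, u, hu, hIV⟩ := mem_pi'.1 (nhds_pi (a := x) ▸ hV)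
  obtain ⟨G, hG_card, hG⟩ := exists_card_eq_of_notMem_Cle hx
  choose a b ha hb hax hxb hmem using fun i => exists_isContLevel_of_mem_nhds (μ := μ) i (hu i)
  let F := {i ∈ I ∪ G | 0 < x i}
  have hGF : G ⊆ F := fun i hi => Finset.mem_filter.2 ⟨Finset.mem_union_right I hi, hG i hi⟩
  have hF : orthant F a ∈ contOrthants j μ :=
    ⟨F, a, by have := Finset.card_le_card hGF; omega, fun i _ => ha i, rfl⟩
  let T := I.image fun i => orthant F a ∩ orthant {i} b
  have hT : ↑T ⊆ contOrthants j μ := fun B hB => by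
    obtain ⟨i, -, rfl⟩ := Finset.mem_image.1 hB
    exact inter_orthant_mem_contOrthants hF fun i _ => hb i
  have hD : orthant F a \ ⋃ B ∈ T, B = {z ∈ orthant F a | ∀ i ∈ I, z i ≤ b i} := by
    simp only [T, Finset.set_biUnion_finset_image, ← inter_iUnion₂, sdiff_self_inter]
    ext z
    simp [orthant]
  refine ⟨_, ⟨_, hF, T, hT, rfl⟩, ?_, ?_⟩ <;> rw [hD]
  · have hbox : (I : Set ℕ).pi (fun i => Iic (b i)) ∈ 𝓝 x :=
      set_pi_mem_nhds I.finite_toSet fun i _ => Iic_mem_nhds (hxb i)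
    have hxF : x ∈ orthant F a := fun i hi => hax i (Finset.mem_filter.1 hi).2
    exact inter_mem ((isOpen_orthant F a).mem_nhds hxF) hbox
  · rintro z ⟨hzF, hzb⟩
    exact hIV fun i hi => hmem i (z i) (hzb i hi) fun hxi =>
      hzF i (Finset.mem_filter.2 ⟨Finset.mem_union_left G hi, hxi⟩)

end ContinuityOrthants

theorem stmt17_general {ι : Type*} {l : Filter ι} [l.IsCountablyGenerated] (j : ℕ)
    (μt : ι → Measure (ℕ → ℝ≥0)) (μ : Measure (ℕ → ℝ≥0))
    (hμt : ∀ t, MemMOseq (Cle j) (μt t)) (hμ : MemMOseq (Cle j) μ)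
    (h : ∀ m : ℕ, j ≤ m → ∀ iv : Fin m → ℕ, StrictMono iv →
        ∀ a : Fin m → ℝ≥0, (∀ k, 0 < a k) →
        BddAwaySeq (Cle j) {x : ℕ → ℝ≥0 | ∀ k, a k < x (iv k)} →
        μ (frontier {x : ℕ → ℝ≥0 | ∀ k, a k < x (iv k)}) = 0 →
        Tendsto (fun t => μt t {x : ℕ → ℝ≥0 | ∀ k, a k < x (iv k)}) l
          (𝓝 (μ {x : ℕ → ℝ≥0 | ∀ k, a k < x (iv k)}))) :
    ∀ f : (ℕ → ℝ≥0) → ℝ, IsCOseq (Cle j) f →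
      Tendsto (fun t => ∫ x, f x ∂μt t) l (𝓝 (∫ x, f x ∂μ)) := by
  rintro f ⟨hf_cont, hf_nonneg, ⟨B, hfB⟩, r, hr, hf_zero⟩
  have := sigmaFinite_of_memMOseq_Cle hμ
  have hfin {ρ} (hρ : MemMOseq (Cle j) ρ) : ∀ A ∈ contOrthants j μ, ρ A ≠ ∞ := fun A hA =>
    hρ.measure_ne_top (bddAwaySeq_of_mem_contOrthants hA)
  have hlim : ∀ A ∈ contOrthants j μ, Tendsto (fun t => (μt t).real A) l (𝓝 (μ.real A)) := by
    intro A hA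
    refine (ENNReal.tendsto_toReal (hfin hμ A hA)).comp ?_
    obtain ⟨m, hm, iv, hiv, a, ha, rfl⟩ := exists_eq_setOf_of_mem_contOrthants hA
    exact h m hm iv hiv a ha (bddAwaySeq_of_mem_contOrthants hA)
      (measure_frontier_of_mem_contOrthants hA)
  obtain ⟨T, hT, hT_cover⟩ := exists_finset_contOrthants_cover (μ := μ) j hr
  have hT_compl : ⋃ A ∈ T, A ⊆ (Cle j)ᶜ := iUnion₂_subset fun A hA =>
    (bddAwaySeq_of_mem_contOrthants (hT hA)).subset_compl
  exact tendsto_integral_of_isPiSystem_of_isOpen isPiSystem_contOrthants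
    (fun _ => isOpen_of_mem_contOrthants) hT
    (fun x hx _ => exists_mem_finiteDiff_contOrthants_of_mem_nhds (hT_compl hx))
    (fun A hA t => hfin (hμt t) A hA) (hfin hμ) hlim (hf_cont.mono hT_compl)
    (fun x => (abs_of_nonneg (hf_nonneg x)).trans_le (hfB x))
    fun x hx => hf_zero x (not_le.1 fun hrx => hx (hT_cover hrx))

/-- The sets `A_{m,i,a} = {x : x_{i_k} > a_k, k = 1,…,m}` (for `m ≥ j`) form a
convergence determining class in `M(O_j)`: if `μ_t(A) → μ(A)` for every such set
that is bounded away from `C_{≤j}` and has `μ(∂A) = 0`, then `μ_t → μ` in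
`M(O_j)` as `t → ∞`. -/
theorem stmt17 (j : ℕ) (hj : 1 ≤ j)
    (μt : ℝ → Measure (ℕ → ℝ≥0)) (μ : Measure (ℕ → ℝ≥0))
    (hμt : ∀ t : ℝ, MemMOseq (Cle j) (μt t)) (hμ : MemMOseq (Cle j) μ)
    (h : ∀ m : ℕ, j ≤ m → ∀ iv : Fin m → ℕ, StrictMono iv →
        ∀ a : Fin m → ℝ≥0, (∀ k, 0 < a k) →
        BddAwaySeq (Cle j) {x : ℕ → ℝ≥0 | ∀ k, a k < x (iv k)} →
        μ (frontier {x : ℕ → ℝ≥0 | ∀ k, a k < x (iv k)}) = 0 →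
        Tendsto (fun t : ℝ => μt t {x : ℕ → ℝ≥0 | ∀ k, a k < x (iv k)}) atTop
          (𝓝 (μ {x : ℕ → ℝ≥0 | ∀ k, a k < x (iv k)}))) :
    ∀ f : (ℕ → ℝ≥0) → ℝ, IsCOseq (Cle j) f →
      Tendsto (fun t : ℝ => ∫ x, f x ∂ μt t) atTop (𝓝 (∫ x, f x ∂ μ)) :=
  stmt17_general j μt μ hμt hμ h
end
end
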